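/- Let n ≥ 2, let E = EuclideanSpace ℝ n, let S = {w ∈ E : ‖w‖ = 1} be the unit sphere with its (n-1)-dimensional Hausdorff measure σ, and let g : S → ℝ be a continuous function. If there is a constant K ∈ ℝ such that the hemispherical transform of g is constant, i.e. ∫_{v ∈ S, ⟪u,v⟫ ≥ 0} g(v) dσ(v) = K for every unit vector u ∈ S, then g is even, i.e. g(-v) = g(v) for all v ∈ S. -/

import Mathlib

open MeasureTheory
open scoped RealInnerProductSpace

/-! Write `ν` for the surface measure of the sphere restricted to the open hemisphere around a pole
`e`, and `h v = g v - g (-v)`. Evenness of the hemispherical transform of `g` says precisely that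
`h` has the same `ν`-integral over `{0 ≤ ⟪u, v⟫}` and over `{⟪u, v⟫ ≤ 0}`. As great spheres are
null, each of the two is half of `∫ h ∂ν`, and `u = e` shows that all these integrals vanish. The
gnomonic projection carries the hemisphere injectively to the affine hyperplane tangent at `e` and
its intersections with half-spaces `{0 ≤ ⟪u, v⟫}` to arbitrary half-spaces of that hyperplane, so
the Cramér–Wold theorem yields `h = 0` almost everywhere near `e`. -/

open Metric Module Set Topology
open NormedSpace hiding normalize

variable {E : Type*}

section CramerWold

variable {X : Type*} [MeasurableSpace X] {μ : Measure X} {f : X → ℝ}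

lemma withDensity_ofReal_eq_withDensity_ofReal_neg_iff (hf : Integrable f μ) {s : Set X}
    (hs : MeasurableSet s) :
    μ.withDensity (fun x ↦ ENNReal.ofReal (f x)) s = μ.withDensity (fun x ↦ ENNReal.ofReal (-f x)) s
      ↔ ∫ x in s, f x ∂μ = 0 := by
  rw [withDensity_apply _ hs, withDensity_apply _ hs,
    integral_eq_lintegral_pos_part_sub_lintegral_neg_part hf.restrict, sub_eq_zero]
  exact (ENNReal.toReal_eq_toReal_iff' hf.restrict.lintegral_lt_top.ne
    hf.neg.restrict.lintegral_lt_top.ne).symm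

variable [NormedAddCommGroup E] [NormedSpace ℝ E] [CompleteSpace E] [SecondCountableTopology E]
  [MeasurableSpace E] [BorelSpace E]

lemma measure_ext_of_dual_halfSpace {μ ν : Measure E} [IsFiniteMeasure μ] [IsFiniteMeasure ν]
    (h : ∀ (L : StrongDual ℝ E) (t : ℝ), μ {x | t ≤ L x} = ν {x | t ≤ L x}) : μ = ν := by
  refine Measure.ext_of_charFunDual (funext fun L ↦ ?_)
  have hmap : μ.map L = ν.map L := Measure.ext_of_Ici _ _ fun t ↦ by
    rw [Measure.map_apply (by fun_prop) measurableSet_Ici,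
      Measure.map_apply (by fun_prop) measurableSet_Ici]
    exact h L t
  rw [charFunDual_eq_charFun_map_one, charFunDual_eq_charFun_map_one, hmap]

lemma setIntegral_preimage_eq_zero_of_dual_halfSpace {T : X → E} (hT : Measurable T)
    (hf : Integrable f μ) (h : ∀ (L : StrongDual ℝ E) (t : ℝ), ∫ x in {x | t ≤ L (T x)}, f x ∂μ = 0)
    {s : Set E} (hs : MeasurableSet s) : ∫ x in T ⁻¹' s, f x ∂μ = 0 := by
  let pos := μ.withDensity fun x ↦ ENNReal.ofReal (f x)
  let neg := μ.withDensity fun x ↦ ENNReal.ofReal (-f x)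
  have : IsFiniteMeasure pos := isFiniteMeasure_withDensity_ofReal hf.2
  have : IsFiniteMeasure neg := isFiniteMeasure_withDensity_ofReal hf.neg.2
  have hmap : pos.map T = neg.map T := measure_ext_of_dual_halfSpace fun L t ↦ by
    have hLt : MeasurableSet {x | t ≤ L x} := measurableSet_le measurable_const (by fun_prop)
    rw [Measure.map_apply hT hLt, Measure.map_apply hT hLt]
    exact (withDensity_ofReal_eq_withDensity_ofReal_neg_iff hf (hT hLt)).2 (h L t)
  rw [← withDensity_ofReal_eq_withDensity_ofReal_neg_iff hf (hT hs),
    ← Measure.map_apply hT hs, ← Measure.map_apply hT hs, hmap]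

lemma ae_eq_zero_of_dual_halfSpace {T : X → E} {N : E → X} (hT : Measurable T) (hN : Measurable N)
    (hNT : ∀ᵐ x ∂μ, N (T x) = x) (hf : Integrable f μ)
    (h : ∀ (L : StrongDual ℝ E) (t : ℝ), ∫ x in {x | t ≤ L (T x)}, f x ∂μ = 0) : f =ᵐ[μ] 0 := by
  refine hf.ae_eq_zero_of_forall_setIntegral_eq_zero fun s hs _ ↦ ?_
  have hpre : T ⁻¹' (N ⁻¹' s) =ᵐ[μ] s := by
    filter_upwards [hNT] with x hx
    simp only [eq_iff_iff]
    exact iff_of_eq (congrArg (· ∈ s) hx)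
  rw [← setIntegral_congr_set hpre]
  exact setIntegral_preimage_eq_zero_of_dual_halfSpace hT hf h (hN hs)

end CramerWold

section HemisphericalTransform

variable [NormedAddCommGroup E] [InnerProductSpace ℝ E] {e u v : E}

/-- The central projection `v ↦ v / ⟪e, v⟫` of the open half-space `0 < ⟪e, v⟫` to the affine
hyperplane `⟪e, v⟫ = 1`. It takes the junk value `0` where `⟪e, v⟫ = 0`. -/
noncomputable def gnomonicProjection (e v : E) : E := ⟪e, v⟫⁻¹ • v

lemma normalize_gnomonicProjection (hv : ‖v‖ = 1) (hev : 0 < ⟪e, v⟫) :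
    NormedSpace.normalize (gnomonicProjection e v) = v := by
  rw [gnomonicProjection, normalize_smul_of_pos (inv_pos.2 hev),
    normalize_eq_self_of_norm_eq_one hv]

lemma le_inner_gnomonicProjection_iff (hev : 0 < ⟪e, v⟫) (a : E) (t : ℝ) :
    t ≤ ⟪a, gnomonicProjection e v⟫ ↔ 0 ≤ ⟪a - t • e, v⟫ := by
  rw [gnomonicProjection, inner_smul_right, inv_mul_eq_div, le_div_iff₀ hev, inner_sub_left,
    real_inner_smul_left, sub_nonneg]

variable [MeasurableSpace E] {μ : Measure E} {g : E → ℝ}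

/-- The hemispherical transform of `g` with respect to a measure `μ`, as a function of the pole `u`
of the hemisphere. The intended `μ` is carried by the unit sphere, so that integrating over a
half-space amounts to integrating over a hemisphere; `u` need not be normalized. -/
noncomputable def hemisphericalTransform (μ : Measure E) (g : E → ℝ) (u : E) : ℝ :=
  ∫ v in {v | 0 ≤ ⟪u, v⟫}, g v ∂μ

lemma hemisphericalTransform_zero : hemisphericalTransform μ g 0 = ∫ v, g v ∂μ := by
  simp [hemisphericalTransform]

lemma hemisphericalTransform_smul {c : ℝ} (hc : 0 < c) (u : E) :
    hemisphericalTransform μ g (c • u) = hemisphericalTransform μ g u := by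
  simp only [hemisphericalTransform, real_inner_smul_left, mul_nonneg_iff_of_pos_left hc]

lemma hemisphericalTransform_eq_integral_of_ae_pos (h : ∀ᵐ v ∂μ, 0 < ⟪u, v⟫) :
    hemisphericalTransform μ g u = ∫ v, g v ∂μ := by
  have hmem : ∀ᵐ v ∂μ, v ∈ {v | 0 ≤ ⟪u, v⟫} := h.mono fun _ hv ↦ hv.le
  rw [hemisphericalTransform, Measure.restrict_eq_self_of_ae_mem hmem]

variable [BorelSpace E]

lemma measurableSet_inner_nonneg (u : E) : MeasurableSet {v : E | 0 ≤ ⟪u, v⟫} :=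
  measurableSet_le measurable_const (by fun_prop)

lemma measurableSet_inner_pos (u : E) : MeasurableSet {v : E | 0 < ⟪u, v⟫} :=
  measurableSet_lt measurable_const (by fun_prop)

lemma hemisphericalTransform_add_neg (hu : μ {v | ⟪u, v⟫ = 0} = 0) (hg : Integrable g μ) :
    hemisphericalTransform μ g u + hemisphericalTransform μ g (-u) = ∫ v, g v ∂μ := by
  have hcompl : ({v | 0 ≤ ⟪u, v⟫}ᶜ : Set E) =ᵐ[μ] {v | 0 ≤ ⟪-u, v⟫} := by
    filter_upwards [measure_eq_zero_iff_ae_notMem.1 hu] with v (hv : ⟪u, v⟫ ≠ 0)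
    simp only [eq_iff_iff]
    change ¬ 0 ≤ ⟪u, v⟫ ↔ 0 ≤ ⟪-u, v⟫
    rw [inner_neg_left, neg_nonneg, not_le, hv.le_iff_lt]
  rw [hemisphericalTransform, hemisphericalTransform, ← setIntegral_congr_set hcompl,
    integral_add_compl (measurableSet_inner_nonneg u) hg]

lemma setIntegral_inner_pos_add_comp_neg [μ.IsNegInvariant] {F : Type*} [NormedAddCommGroup F]
    [NormedSpace ℝ F] {f : E → F} (he : μ {v | ⟪e, v⟫ = 0} = 0) (hf : Integrable f μ) :
    ∫ v in {v | 0 < ⟪e, v⟫}, (f v + f (-v)) ∂μ = ∫ v, f v ∂μ := by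
  have hneg : ∫ v in {v | 0 < ⟪e, v⟫}, f (-v) ∂μ = ∫ v in {v | ⟪e, v⟫ < 0}, f v ∂μ := by
    rw [← (Measure.measurePreserving_neg μ).setIntegral_preimage_emb
      (MeasurableEquiv.neg E).measurableEmbedding]
    simp
  have hcompl : ({v | 0 < ⟪e, v⟫}ᶜ : Set E) =ᵐ[μ] {v | ⟪e, v⟫ < 0} := by
    filter_upwards [measure_eq_zero_iff_ae_notMem.1 he] with v (hv : ⟪e, v⟫ ≠ 0)
    simp only [eq_iff_iff]
    change ¬ 0 < ⟪e, v⟫ ↔ ⟪e, v⟫ < 0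
    rw [not_lt, hv.le_iff_lt]
  rw [integral_add hf.restrict hf.comp_neg.restrict, hneg, ← setIntegral_congr_set hcompl,
    integral_add_compl (measurableSet_inner_pos e) hf]

lemma hemisphericalTransform_restrict_sub_comp_neg [μ.IsNegInvariant]
    (he : μ {v | ⟪e, v⟫ = 0} = 0) (hg : Integrable g μ) (u : E) :
    let ν := μ.restrict {v | 0 < ⟪e, v⟫}
    let h := fun v ↦ g v - g (-v)
    hemisphericalTransform ν h u - hemisphericalTransform ν h (-u)
      = hemisphericalTransform μ g u - hemisphericalTransform μ g (-u) := by
  intro ν h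
  have integral_indicator_sub {ρ : Measure E} {k : E → ℝ} (hk : Integrable k ρ) :
      ∫ v, ({v | 0 ≤ ⟪u, v⟫}.indicator k v - {v | 0 ≤ ⟪-u, v⟫}.indicator k v) ∂ρ
        = hemisphericalTransform ρ k u - hemisphericalTransform ρ k (-u) := by
    rw [integral_sub (hk.indicator (measurableSet_inner_nonneg u))
        (hk.indicator (measurableSet_inner_nonneg (-u))),
      integral_indicator (measurableSet_inner_nonneg u),
      integral_indicator (measurableSet_inner_nonneg (-u))]
    rfl
  have hh : Integrable h ν := (hg.sub hg.comp_neg).restrict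
  have hF : Integrable
      (fun v ↦ {v | 0 ≤ ⟪u, v⟫}.indicator g v - {v | 0 ≤ ⟪-u, v⟫}.indicator g v) μ :=
    (hg.indicator (measurableSet_inner_nonneg u)).sub
      (hg.indicator (measurableSet_inner_nonneg (-u)))
  rw [← integral_indicator_sub hh, ← integral_indicator_sub hg,
    ← setIntegral_inner_pos_add_comp_neg he hF]
  congr 1 with v
  simp only [indicator_apply, mem_ofPred_eq, inner_neg_left, inner_neg_right, neg_neg, h]
  split_ifs <;> ring

lemma hemisphericalTransform_restrict_sub_comp_neg_eq_zero [μ.IsNegInvariant]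
    (hnull : ∀ u ≠ 0, μ {v | ⟪u, v⟫ = 0} = 0) (hg : Integrable g μ)
    (hneg : ∀ u, hemisphericalTransform μ g (-u) = hemisphericalTransform μ g u)
    (he : e ≠ 0) (u : E) :
    hemisphericalTransform (μ.restrict {v | 0 < ⟪e, v⟫}) (fun v ↦ g v - g (-v)) u = 0 := by
  set ν := μ.restrict {v | 0 < ⟪e, v⟫}
  set h : E → ℝ := fun v ↦ g v - g (-v)
  have hsymm (u : E) : hemisphericalTransform ν h u = hemisphericalTransform ν h (-u) := by
    rw [← sub_eq_zero, hemisphericalTransform_restrict_sub_comp_neg (hnull e he) hg, hneg, sub_self]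
  have hsum {u : E} (hu : u ≠ 0) :
      hemisphericalTransform ν h u + hemisphericalTransform ν h (-u) = ∫ v, h v ∂ν :=
    hemisphericalTransform_add_neg (Measure.restrict_le_self.absolutelyContinuous (hnull u hu))
      (hg.sub hg.comp_neg).restrict
  have hpole : hemisphericalTransform ν h e = ∫ v, h v ∂ν :=
    hemisphericalTransform_eq_integral_of_ae_pos (ae_restrict_mem (measurableSet_inner_pos e))
  have htotal : ∫ v, h v ∂ν = 0 := by linarith [hsymm e, hsum he]
  rcases eq_or_ne u 0 with rfl | hu
  · rw [hemisphericalTransform_zero, htotal]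
  · linarith [hsymm u, hsum hu]

variable [CompleteSpace E] [SecondCountableTopology E]

lemma ae_eq_zero_of_hemisphericalTransform_eq_zero (hμ : ∀ᵐ v ∂μ, ‖v‖ = 1 ∧ 0 < ⟪e, v⟫)
    (hg : Integrable g μ) (h : ∀ u, hemisphericalTransform μ g u = 0) : g =ᵐ[μ] 0 := by
  refine ae_eq_zero_of_dual_halfSpace (T := gnomonicProjection e) (N := NormedSpace.normalize)
    (by unfold gnomonicProjection; fun_prop) (by unfold NormedSpace.normalize; fun_prop)
    (hμ.mono fun v hv ↦ normalize_gnomonicProjection hv.1 hv.2) hg fun L t ↦ ?_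
  obtain ⟨a, rfl⟩ := (InnerProductSpace.toDual ℝ E).surjective L
  have hhalf : {v | t ≤ ⟪a, gnomonicProjection e v⟫} =ᵐ[μ] {v | 0 ≤ ⟪a - t • e, v⟫} :=
    hμ.mono fun v hv ↦ propext (le_inner_gnomonicProjection_iff hv.2 a t)
  simp only [InnerProductSpace.toDual_apply_apply]
  rw [setIntegral_congr_set hhalf]
  exact h (a - t • e)

theorem ae_comp_neg_eq_of_hemisphericalTransform_neg [μ.IsNegInvariant] (hμ : ∀ᵐ v ∂μ, ‖v‖ = 1)
    (hnull : ∀ u ≠ 0, μ {v | ⟪u, v⟫ = 0} = 0) (hg : Integrable g μ)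
    (hneg : ∀ u, hemisphericalTransform μ g (-u) = hemisphericalTransform μ g u) :
    ∀ᵐ v ∂μ, g (-v) = g v := by
  have on_hemisphere {e : E} (he : e ≠ 0) : ∀ᵐ v ∂μ, 0 < ⟪e, v⟫ → g (-v) = g v := by
    refine (ae_restrict_iff' (measurableSet_inner_pos e)).1 ?_
    have hsphere : ∀ᵐ v ∂μ.restrict {v | 0 < ⟪e, v⟫}, ‖v‖ = 1 ∧ 0 < ⟪e, v⟫ :=
      (ae_restrict_of_ae hμ).and (ae_restrict_mem (measurableSet_inner_pos e))
    filter_upwards [ae_eq_zero_of_hemisphericalTransform_eq_zero hsphere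
      (hg.sub hg.comp_neg).restrict
      (hemisphericalTransform_restrict_sub_comp_neg_eq_zero hnull hg hneg he)] with v hv
    exact (sub_eq_zero.1 hv).symm
  rcases subsingleton_or_nontrivial E with _ | _
  · exact .of_forall fun v ↦ congrArg g (Subsingleton.elim _ _)
  obtain ⟨e, he⟩ := exists_ne (0 : E)
  filter_upwards [on_hemisphere he, on_hemisphere (neg_ne_zero.2 he),
    measure_eq_zero_iff_ae_notMem.1 (hnull e he)] with v hpos hneg (hzero : ⟪e, v⟫ ≠ 0)
  rcases hzero.lt_or_gt with hv | hv
  · exact hneg (by rwa [inner_neg_left, neg_pos])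
  · exact hpos hv

end HemisphericalTransform

section SphereMeasure

lemma norm_mul_norm_normalize_sub_normalize_le [NormedAddCommGroup E] [NormedSpace ℝ E] (x y : E) :
    ‖x‖ * ‖NormedSpace.normalize x - NormedSpace.normalize y‖ ≤ 2 * ‖x - y‖ := by
  have hy : ‖NormedSpace.normalize y‖ ≤ 1 := by
    rcases eq_or_ne y 0 with rfl | hy
    · simp
    · exact (norm_normalize_eq_one_iff.2 hy).le
  calc ‖x‖ * ‖NormedSpace.normalize x - NormedSpace.normalize y‖
      = ‖(x - y) + (‖y‖ - ‖x‖) • NormedSpace.normalize y‖ := by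
        rw [← norm_norm x, ← norm_smul, norm_norm, smul_sub, sub_smul, norm_smul_normalize,
          norm_smul_normalize]
        congr 1
        abel
    _ ≤ ‖x - y‖ + |‖y‖ - ‖x‖| * ‖NormedSpace.normalize y‖ := by
        exact (norm_add_le _ _).trans_eq (by rw [norm_smul, Real.norm_eq_abs])
    _ ≤ ‖x - y‖ + ‖x - y‖ * 1 := by
        gcongr
        exact norm_sub_rev y x ▸ abs_norm_sub_norm_le y x
    _ = 2 * ‖x - y‖ := by ring

lemma lipschitzOnWith_normalize [NormedAddCommGroup E] [NormedSpace ℝ E] :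
    LipschitzOnWith 2 NormedSpace.normalize {x : E | 1 ≤ ‖x‖} :=
  .of_dist_le_mul fun x hx y _ ↦ by
    rw [dist_eq_norm, dist_eq_norm]
    exact (le_mul_of_one_le_left (norm_nonneg _) hx).trans
      (norm_mul_norm_normalize_sub_normalize_le x y)

variable [NormedAddCommGroup E] [InnerProductSpace ℝ E] {u v w : E}

lemma inner_eq_zero_of_mem_orthogonal_span_singleton (x : (ℝ ∙ v)ᗮ) : ⟪v, (x : E)⟫ = 0 :=
  Submodule.mem_orthogonal_singleton_iff_inner_right.1 x.2

lemma lipschitzWith_normalize_add (hv : ‖v‖ = 1) :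
    LipschitzWith 2 fun x : (ℝ ∙ v)ᗮ ↦ NormedSpace.normalize (v + x) := by
  have one_le (x : (ℝ ∙ v)ᗮ) : 1 ≤ ‖v + x‖ := by
    have hinner : ⟪v, v + x⟫ = 1 := by
      rw [inner_add_right, inner_eq_zero_of_mem_orthogonal_span_singleton,
        real_inner_self_eq_norm_sq, hv, one_pow, add_zero]
    simpa [hinner, hv] using real_inner_le_norm v (v + x)
  have htranslate : LipschitzOnWith 1 (fun x : (ℝ ∙ v)ᗮ ↦ v + (x : E)) univ :=
    ((isometry_add_left v).comp isometry_subtype_coe).lipschitz.lipschitzOnWith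
  rw [← lipschitzOnWith_univ, ← mul_one 2]
  exact lipschitzOnWith_normalize.comp htranslate fun x _ ↦ one_le x

lemma gnomonicProjection_sub_mem_orthogonal (hv : ‖v‖ = 1) (hvw : ⟪v, w⟫ ≠ 0) :
    gnomonicProjection v w - v ∈ (ℝ ∙ v)ᗮ := by
  rw [Submodule.mem_orthogonal_singleton_iff_inner_right, inner_sub_right, gnomonicProjection,
    inner_smul_right, inv_mul_cancel₀ hvw, real_inner_self_eq_norm_sq, hv, one_pow, sub_self]

lemma sphere_inter_half_lt_inner_subset_image (hv : ‖v‖ = 1) :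
    sphere 0 1 ∩ {w | 1 / 2 < ⟪v, w⟫} ⊆
      (fun x : (ℝ ∙ v)ᗮ ↦ NormedSpace.normalize (v + x)) '' ball 0 3 := by
  rintro w ⟨hw, hvw : 1 / 2 < ⟪v, w⟫⟩
  rw [mem_sphere_zero_iff_norm] at hw
  have hpos : 0 < ⟪v, w⟫ := by linarith
  refine ⟨⟨_, gnomonicProjection_sub_mem_orthogonal hv hpos.ne'⟩, ?_, ?_⟩
  · have hnorm : ‖gnomonicProjection v w‖ < 2 := by
      rw [gnomonicProjection, norm_smul, hw, mul_one, norm_inv, Real.norm_of_nonneg hpos.le]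
      rw [inv_lt_comm₀ hpos two_pos]
      linarith
    rw [mem_ball_zero_iff, Submodule.coe_norm]
    linarith [norm_sub_le (gnomonicProjection v w) v]
  · simp only [add_sub_cancel]
    exact normalize_gnomonicProjection hw hpos

lemma orthogonalProjectionOnto_add_smul (x : (ℝ ∙ v)ᗮ) (c : ℝ) :
    (ℝ ∙ v)ᗮ.orthogonalProjectionOnto (x + c • v) = x := by
  have hv : (ℝ ∙ v)ᗮ.orthogonalProjectionOnto v = 0 := by
    rw [Submodule.orthogonalProjectionOnto_eq_zero_iff]
    exact Submodule.le_orthogonal_orthogonal _ (Submodule.mem_span_singleton_self v)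
  rw [map_add, map_smul, hv, smul_zero, add_zero,
    Submodule.orthogonalProjectionOnto_mem_subspace_eq_self]

lemma norm_add_sqrt_one_sub_sq_smul (hv : ‖v‖ = 1) {x : (ℝ ∙ v)ᗮ} (hx : ‖x‖ ≤ 1) :
    ‖(x : E) + √(1 - ‖x‖ ^ 2) • v‖ = 1 := by
  have horth : ⟪(x : E), √(1 - ‖x‖ ^ 2) • v⟫ = 0 := by
    rw [inner_smul_right, real_inner_comm, inner_eq_zero_of_mem_orthogonal_span_singleton, mul_zero]
  have hsq : ‖(x : E) + √(1 - ‖x‖ ^ 2) • v‖ ^ 2 = 1 := by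
    rw [norm_add_sq_real, horth, norm_smul, hv, mul_one, Real.norm_eq_abs, sq_abs,
      Real.sq_sqrt (sub_nonneg.2 (pow_le_one₀ (norm_nonneg x) hx)), Submodule.coe_norm]
    ring
  exact (pow_eq_one_iff_of_nonneg (norm_nonneg _) two_ne_zero).1 hsq

lemma finrank_orthogonal_span_singleton_eq_sub_one [FiniteDimensional ℝ E] (hv : v ≠ 0) :
    (finrank ℝ (ℝ ∙ v)ᗮ : ℝ) = finrank ℝ E - 1 := by
  rw [← (ℝ ∙ v).finrank_add_finrank_orthogonal, finrank_span_singleton hv]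
  push_cast
  ring

variable [MeasurableSpace E] [BorelSpace E]

/-- The surface measure of the unit sphere of `E`, as a measure on `E`: the Hausdorff measure of
codimension one restricted to the sphere. -/
noncomputable def sphereMeasure (E : Type*) [NormedAddCommGroup E] [InnerProductSpace ℝ E]
    [MeasurableSpace E] [BorelSpace E] : Measure E :=
  (μH[(finrank ℝ E : ℝ) - 1]).restrict (sphere 0 1)

instance isNegInvariant_sphereMeasure : (sphereMeasure E).IsNegInvariant := by
  have hpre : (IsometryEquiv.neg E) ⁻¹' sphere 0 1 = sphere 0 1 := by ext; simp
  have hmp := ((IsometryEquiv.neg E).measurePreserving_hausdorffMeasure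
    ((finrank ℝ E : ℝ) - 1)).restrict_preimage (isClosed_sphere (x := 0) (ε := 1)).measurableSet
  rw [hpre] at hmp
  exact ⟨hmp.map_eq⟩

lemma ae_norm_eq_one_sphereMeasure : ∀ᵐ v ∂sphereMeasure E, ‖v‖ = 1 := by
  filter_upwards [ae_restrict_mem isClosed_sphere.measurableSet] with v hv
  exact mem_sphere_zero_iff_norm.1 hv

lemma hemisphericalTransform_sphereMeasure (g : E → ℝ) (u : E) :
    hemisphericalTransform (sphereMeasure E) g u
      = ∫ v in {w | ‖w‖ = 1 ∧ 0 ≤ ⟪u, w⟫}, g v ∂μH[(finrank ℝ E : ℝ) - 1] := by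
  have hset : sphere 0 1 ∩ {w | 0 ≤ ⟪u, w⟫} = {w | ‖w‖ = 1 ∧ 0 ≤ ⟪u, w⟫} := by
    ext w
    simp only [mem_inter_iff, mem_sphere_zero_iff_norm, mem_ofPred_eq]
  rw [hemisphericalTransform, sphereMeasure,
    Measure.restrict_restrict (measurableSet_inner_nonneg u), inter_comm, hset]

variable [FiniteDimensional ℝ E]

instance isFiniteMeasure_sphereMeasure : IsFiniteMeasure (sphereMeasure E) := by
  refine isFiniteMeasure_restrict.2 (LT.lt.ne ?_)
  refine (isCompact_sphere 0 1).measure_lt_top_of_nhdsWithin fun v hv ↦ ?_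
  rw [mem_sphere_zero_iff_norm] at hv
  have hcap : {w | 1 / 2 < ⟪v, w⟫} ∈ 𝓝 v := by
    refine (isOpen_lt continuous_const (by fun_prop)).mem_nhds ?_
    norm_num [hv]
  refine ⟨_, inter_mem_nhdsWithin _ hcap,
    (measure_mono (sphere_inter_half_lt_inner_subset_image hv)).trans_lt ?_⟩
  rw [← finrank_orthogonal_span_singleton_eq_sub_one (norm_ne_zero_iff.1 (hv ▸ one_ne_zero))]
  exact ((lipschitzWith_normalize_add hv).hausdorffMeasure_image_le (Nat.cast_nonneg _) _).trans_lt
    (ENNReal.mul_lt_top (by finiteness) isBounded_ball.measure_lt_top)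

lemma sphereMeasure_inner_eq_zero (hu : u ≠ 0) : sphereMeasure E {v | ⟪u, v⟫ = 0} = 0 := by
  have hsub : {v : E | ⟪u, v⟫ = 0} ∩ sphere 0 1 ⊆ (↑) '' sphere (0 : (ℝ ∙ u)ᗮ) 1 := by
    rintro v ⟨huv, hv⟩
    exact ⟨⟨v, Submodule.mem_orthogonal_singleton_iff_inner_right.2 huv⟩, by simpa using hv, rfl⟩
  rw [sphereMeasure, Measure.restrict_apply (measurableSet_eq_fun (by fun_prop) measurable_const),
    ← finrank_orthogonal_span_singleton_eq_sub_one hu]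
  refine measure_mono_null hsub ?_
  rw [isometry_subtype_coe.hausdorffMeasure_image (.inl (Nat.cast_nonneg _))]
  exact Measure.addHaar_sphere_of_ne_zero _ _ one_ne_zero

lemma sphere_subset_support_sphereMeasure : sphere 0 1 ⊆ (sphereMeasure E).support := by
  intro v hv
  rw [mem_sphere_zero_iff_norm] at hv
  refine (Measure.mem_support_iff_forall v).2 fun U hU ↦ ?_
  rw [sphereMeasure, Measure.restrict_apply' isClosed_sphere.measurableSet,
    ← finrank_orthogonal_span_singleton_eq_sub_one (norm_ne_zero_iff.1 (hv ▸ one_ne_zero))]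
  refine lt_of_lt_of_le ?_
    (hausdorffMeasure_orthogonalProjectionOnto_le (ℝ ∙ v)ᗮ _ _ (Nat.cast_nonneg _))
  let chart (x : (ℝ ∙ v)ᗮ) : E := x + √(1 - ‖x‖ ^ 2) • v
  have hchart : Continuous chart := by unfold chart; fun_prop
  have hnhds : chart ⁻¹' U ∩ ball 0 1 ∈ 𝓝 0 :=
    Filter.inter_mem (hchart.continuousAt.preimage_mem_nhds (by simpa [chart] using hU))
      (ball_mem_nhds _ one_pos)
  refine (Measure.measure_pos_of_mem_nhds _ hnhds).trans_le (measure_mono ?_)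
  rintro x ⟨hxU, hx⟩
  rw [mem_ball_zero_iff] at hx
  exact ⟨chart x, ⟨hxU, mem_sphere_zero_iff_norm.2 (norm_add_sqrt_one_sub_sq_smul hv hx.le)⟩,
    orthogonalProjectionOnto_add_smul x _⟩

lemma integrable_sphereMeasure_of_continuousOn {g : E → ℝ} (hg : ContinuousOn g (sphere 0 1)) :
    Integrable g (sphereMeasure E) := by
  have hint : IntegrableOn g (sphere 0 1) (sphereMeasure E) :=
    hg.integrableOn_compact (isCompact_sphere 0 1)
  rwa [IntegrableOn, sphereMeasure, Measure.restrict_restrict isClosed_sphere.measurableSet,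
    inter_self] at hint

end SphereMeasure

lemma eqOn_of_ae_eq_of_subset_support {X Y : Type*} [TopologicalSpace X] [MeasurableSpace X]
    [TopologicalSpace Y] [T2Space Y] {μ : Measure X} {f g : X → Y} {s : Set X}
    (hfg : f =ᵐ[μ] g) (hμ : ∀ᵐ x ∂μ, x ∈ s) (hs : s ⊆ μ.support)
    (hf : ContinuousOn f s) (hg : ContinuousOn g s) : EqOn f g s := by
  intro x hx
  by_contra hne
  have hne_near : ∀ᶠ y in 𝓝[s] x, f y ≠ g y :=
    ((hf x hx).prodMk_nhds (hg x hx)).eventually (isClosed_diagonal.isOpen_compl.mem_nhds hne)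
  have hpos : 0 < μ {y | y ∈ s → f y ≠ g y} :=
    (Measure.mem_support_iff_forall x).1 (hs hx) _ (eventually_nhdsWithin_iff.1 hne_near)
  refine hpos.ne' (measure_eq_zero_iff_ae_notMem.2 ?_)
  filter_upwards [hfg, hμ] with y heq hy himp
  exact himp hy heq

theorem constant_hemispherical_transform_even_general [NormedAddCommGroup E]
    [InnerProductSpace ℝ E] [FiniteDimensional ℝ E] [MeasurableSpace E] [BorelSpace E] {g : E → ℝ}
    (hg : ContinuousOn g (sphere 0 1))
    (hneg : ∀ u, ‖u‖ = 1 → hemisphericalTransform (sphereMeasure E) g (-u)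
      = hemisphericalTransform (sphereMeasure E) g u) :
    ∀ v, ‖v‖ = 1 → g (-v) = g v := by
  have hneg_all (u : E) : hemisphericalTransform (sphereMeasure E) g (-u)
      = hemisphericalTransform (sphereMeasure E) g u := by
    rcases eq_or_ne u 0 with rfl | hu
    · rw [neg_zero]
    rw [← norm_smul_normalize u, ← smul_neg, hemisphericalTransform_smul (norm_pos_iff.2 hu),
      hemisphericalTransform_smul (norm_pos_iff.2 hu), hneg _ (norm_normalize_eq_one_iff.2 hu)]
  have hae : ∀ᵐ v ∂sphereMeasure E, g (-v) = g v :=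
    ae_comp_neg_eq_of_hemisphericalTransform_neg ae_norm_eq_one_sphereMeasure
      (fun _ ↦ sphereMeasure_inner_eq_zero) (integrable_sphereMeasure_of_continuousOn hg) hneg_all
  have hg_neg : ContinuousOn (fun v ↦ g (-v)) (sphere 0 1) :=
    hg.comp continuousOn_neg fun v hv ↦ by simpa using hv
  intro v hv
  exact eqOn_of_ae_eq_of_subset_support hae
    (ae_norm_eq_one_sphereMeasure.mono fun _ ↦ mem_sphere_zero_iff_norm.2)
    sphere_subset_support_sphereMeasure hg_neg hg (mem_sphere_zero_iff_norm.2 hv)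

/-- **A function with constant hemispherical transform is even.**
Let `g` be a continuous function on the unit sphere of `EuclideanSpace ℝ (Fin n)`
(`n ≥ 2`). If the hemispherical transform
`u ↦ ∫_{v ∈ S, ⟪u,v⟫ ≥ 0} g(v) dσ(v)` (with `σ` the `(n-1)`-dimensional Hausdorff
measure) is constantly equal to `K`, then `g` is even on the sphere. -/
theorem constant_hemispherical_transform_even (n : ℕ) (hn : 2 ≤ n)
    (g : EuclideanSpace ℝ (Fin n) → ℝ)
    (hg : ContinuousOn g {w : EuclideanSpace ℝ (Fin n) | ‖w‖ = 1})
    (K : ℝ)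
    (hK : ∀ u : EuclideanSpace ℝ (Fin n), ‖u‖ = 1 →
      ∫ v in {w : EuclideanSpace ℝ (Fin n) | ‖w‖ = 1 ∧ 0 ≤ ⟪u, w⟫}, g v
        ∂(μH[(n : ℝ) - 1]) = K) :
    ∀ v : EuclideanSpace ℝ (Fin n), ‖v‖ = 1 → g (-v) = g v := by
  have hg' : ContinuousOn g (sphere 0 1) := by simpa only [sphere, dist_zero_right] using hg
  refine constant_hemispherical_transform_even_general hg' fun u hu ↦ ?_
  simp only [hemisphericalTransform_sphereMeasure, finrank_euclideanSpace_fin]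
  rw [hK u hu, hK (-u) (by rwa [norm_neg])]
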